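/- arXiv:1808.06333 — 2 statements merged into one kernel-verified Lean document; each statement's English description precedes it below -/
import Mathlib

section
/- Let A be a semisimple unital complex Banach algebra and let S denote the set of finite-rank elements of A. If there exists a nonnegative integer n such that rank(a) ≤ n for every a ∈ S, then there exists an idempotent p ∈ S (p·p = p) such that S = { p·x·p : x ∈ A }. -/
open scoped ENNReal

/-- The spectral rank of an element of a complex algebra:
`rank a = sup_{x ∈ A} #σ'(x·a)`. -/
noncomputable def spectralRank {A : Type*} [Ring A] [Algebra ℂ A] (a : A) : ℕ∞ :=
  ⨆ x : A, ((spectrum ℂ (x * a)) \ {0}).encard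

/-
Two orthogonal idempotents of finite rank have a sum of finite rank, because an idempotent `e` has
finite rank if and only if its corner algebra `eAe` is finite-dimensional. If `eAe` is
finite-dimensional, Cayley–Hamilton bounds the spectra of its elements. Conversely, induct on the
rank: a primitive `e` of finite rank has `eAe = ℂe`, and a non-primitive one is a sum of two
orthogonal idempotents `f` and `g` of smaller rank; semiprimeness makes the mixed components `fAg`
and `gAf` finite-dimensional as well.

Now let `p` be an idempotent of largest rank. A finite-rank `d` orthogonal to `p` has zero spectral
radius: otherwise the Riesz idempotent `q` of its finite nonzero spectrum is a nonzero finite-rank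
idempotent orthogonal to `p`, and `p + q` has larger rank than `p`. Semisimplicity then gives
`pa = a = ap` for all `a` of finite rank.

The Riesz idempotent is built without contour integrals. If `P` interpolates `z⁻¹` on the nonzero
spectrum of `d`, then `c = d * P(d)` satisfies `r(c - c²) = 0`, and solving `w - w² = c - c²` for
`w` by the Catalan series yields the idempotent `(c - w) * (1 - 2w)⁻¹`.
-/

open Filter Polynomial

section Idempotents

variable {K A : Type*} [Field K] [Ring A] [Algebra K A]

lemma mem_spectrum_of_mul_eq_smul {a v : A} {c : K} (hv : v ≠ 0) (h : a * v = c • v) :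
    c ∈ spectrum K a := fun hu ↦
  hv <| hu.mul_right_eq_zero.1 <| by rw [sub_mul, h, Algebra.smul_def, sub_self]

lemma spectrum_zero_subset : spectrum K (0 : A) ⊆ {0} := fun c hc ↦ by
  by_contra hc0
  exact hc <| by
    simpa only [spectrum.mem_resolventSet_iff, sub_zero] using
      (IsUnit.mk0 c hc0).map (algebraMap K A)

lemma one_mem_spectrum_of_isIdempotentElem {e : A} (he : IsIdempotentElem e) (he0 : e ≠ 0) :
    (1 : K) ∈ spectrum K e :=
  mem_spectrum_of_mul_eq_smul he0 <| by rw [he.eq, one_smul]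

lemma spectrum_mul_idempotent_diff_zero {e : A} (he : IsIdempotentElem e) (x : A) :
    spectrum K (x * e) \ {0} = spectrum K (e * x * e) \ {0} := by
  conv_lhs => rw [← he.eq, ← mul_assoc, spectrum.nonzero_mul_comm, ← mul_assoc]

lemma isUnit_smul_one_sub_add {e d y : A} {c : K} (he : IsIdempotentElem e) (hc : c ≠ 0)
    (hed : e * d = d) (hde : d * e = d) (hcomm : Commute d y) (hdy : d * y = e) :
    IsUnit (c • (1 - e) + d) := by
  have hyd : y * d = e := hcomm.eq ▸ hdy
  have hey : e * y = y * e := by rw [← hdy, hcomm.eq, mul_assoc, hcomm.eq]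
  have hd_compl : d * (1 - e) = 0 := by rw [mul_sub, mul_one, hde, sub_self]
  have hcompl_d : (1 - e) * d = 0 := by rw [sub_mul, one_mul, hed, sub_self]
  refine isUnit_iff_exists.2 ⟨c⁻¹ • (1 - e) + e * y, ?_, ?_⟩
  · calc (c • (1 - e) + d) * (c⁻¹ • (1 - e) + e * y)
        = (c⁻¹ * c) • ((1 - e) * (1 - e)) + c⁻¹ • (d * (1 - e)) + (c • ((1 - e) * e * y)
            + d * e * y) := by
          simp only [add_mul, mul_add, smul_mul_assoc, mul_smul_comm, smul_add, smul_smul,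
            mul_assoc]
      _ = 1 := by
          simp [hd_compl, he.one_sub.eq, he.one_sub_mul_self, hde, hdy, inv_mul_cancel₀ hc]
  · calc (c⁻¹ • (1 - e) + e * y) * (c • (1 - e) + d)
        = (c * c⁻¹) • ((1 - e) * (1 - e)) + c • (e * y * (1 - e)) + (c⁻¹ • ((1 - e) * d)
            + e * (y * d)) := by
          simp only [add_mul, mul_add, smul_mul_assoc, mul_smul_comm, smul_add, smul_smul,
            mul_assoc]
      _ = 1 := by
          simp [hcompl_d, he.one_sub.eq, hey, mul_assoc, he.mul_one_sub_self, hyd, he.eq,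
            mul_inv_cancel₀ hc]

lemma spectrum_idempotent_mul_diff_zero_subset {e z : A} (he : IsIdempotentElem e)
    (hez : Commute e z) : spectrum K (e * z) \ {0} ⊆ spectrum K z \ {0} := by
  rintro c ⟨hc, hc0⟩
  refine ⟨fun hu ↦ hc (spectrum.mem_resolventSet_iff.2 ?_), hc0⟩
  obtain ⟨u, hu⟩ := hu
  have heu : Commute e u := hu ▸ (Algebra.commute_algebraMap_right c e).sub_right hez
  have hsplit : algebraMap K A c - e * z = c • (1 - e) + e * u := by
    rw [hu, mul_sub, ← Algebra.commutes, Algebra.algebraMap_eq_smul_one, smul_sub,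
      smul_mul_assoc, one_mul]
    abel
  rw [hsplit]
  refine isUnit_smul_one_sub_add (y := ↑u⁻¹) he hc0 ?_ ?_ ?_ (Units.mul_inv_cancel_right e u)
  · rw [← mul_assoc, he.eq]
  · rw [mul_assoc, ← heu.eq, ← mul_assoc, he.eq]
  · exact heu.units_inv_right.mul_left (Commute.refl (u : A)).units_inv_right

end Idempotents

section PeirceSpace

variable {K A : Type*} [Field K] [Ring A] [Algebra K A]

variable (K) in
/-- The Peirce component `eAf = {e * x * f | x ∈ A}`, mostly used for idempotents `e` and `f`; for
`e = f` it is the corner algebra of `e`. -/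
def peirceSpace (e f : A) : Submodule K A :=
  LinearMap.range (LinearMap.mulLeft K e ∘ₗ LinearMap.mulRight K f)

lemma mul_mul_mem_peirceSpace (e x f : A) : e * x * f ∈ peirceSpace K e f :=
  ⟨x, (mul_assoc e x f).symm⟩

lemma mem_peirceSpace_iff {e f x : A} (he : IsIdempotentElem e) (hf : IsIdempotentElem f) :
    x ∈ peirceSpace K e f ↔ e * x = x ∧ x * f = x := by
  constructor
  · rintro ⟨y, rfl⟩
    simp [← mul_assoc, he.eq, mul_assoc _ f f, hf.eq]
  · rintro ⟨hex, hxf⟩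
    simpa [hex, hxf] using mul_mul_mem_peirceSpace (K := K) e x f

/- If finitely many products `y i * x i` with `y i ∈ fAe` and `x i ∈ eAf` span `fAeAf`, then
`x ↦ (x * y i)ᵢ` embeds `eAf` into a power of `eAe`: an `x` killed by all the `y i` kills
`fAeAf`, whence `xAx = 0`. -/
lemma finiteDimensional_peirceSpace (hA : ∀ a : A, (∀ x, a * x * a = 0) → a = 0) {e f : A}
    (he : IsIdempotentElem e) (hf : IsIdempotentElem f)
    [FiniteDimensional K (peirceSpace K e e)] [FiniteDimensional K (peirceSpace K f f)] :
    FiniteDimensional K (peirceSpace K e f) := by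
  let P : Set A := {z | ∃ y x : A, f * y * e * x * f = z}
  have hP : Submodule.span K P ≤ peirceSpace K f f := by
    rw [Submodule.span_le]
    rintro _ ⟨y, x, rfl⟩
    simpa only [SetLike.mem_coe, mul_assoc] using
      mul_mul_mem_peirceSpace (K := K) f (y * e * x) f
  have hfg : (Submodule.span K P).FG :=
    Module.Finite.iff_fg.1 (Submodule.finiteDimensional_of_le hP)
  obtain ⟨t, htP, hspan⟩ := (Submodule.fg_span_iff_fg_span_finset_subset P).1 hfg
  choose y x hyx using fun z : t ↦ htP z.2
  let Φ : peirceSpace K e f →ₗ[K] t → peirceSpace K e e := LinearMap.pi fun z ↦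
    ((LinearMap.mulRight K (f * y z * e)).comp (peirceSpace K e f).subtype).codRestrict _ <| by
      rintro ⟨_, w, rfl⟩
      simpa [mul_assoc] using mul_mul_mem_peirceSpace (K := K) e (w * (f * (f * y z))) e
  refine Module.Finite.of_injective Φ ((injective_iff_map_eq_zero Φ).2 ?_)
  rintro ⟨w, hw⟩ hΦ
  obtain ⟨hew, hwf⟩ := (mem_peirceSpace_iff he hf).1 hw
  have hwy (z : t) : w * (f * y z * e) = 0 := congrArg Subtype.val (congrFun hΦ z)
  have hwP : Submodule.span K P ≤ LinearMap.ker (LinearMap.mulLeft K w) := by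
    rw [hspan, Submodule.span_le]
    intro z hz
    have hprod : f * y ⟨z, hz⟩ * e * x ⟨z, hz⟩ * f = z := hyx ⟨z, hz⟩
    rw [SetLike.mem_coe, LinearMap.mem_ker, LinearMap.mulLeft_apply, ← hprod, mul_assoc _ _ f,
      ← mul_assoc w, hwy, zero_mul]
  refine Subtype.ext (hA w fun v ↦ ?_)
  have hzero : w * (f * v * e * w * f) = 0 := hwP (Submodule.subset_span ⟨v, w, rfl⟩)
  simpa only [mul_assoc, hwf, hew, ← mul_assoc w f] using hzero

lemma finiteDimensional_peirceSpace_add (hA : ∀ a : A, (∀ x, a * x * a = 0) → a = 0) {e f : A}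
    (he : IsIdempotentElem e) (hf : IsIdempotentElem f)
    [FiniteDimensional K (peirceSpace K e e)] [FiniteDimensional K (peirceSpace K f f)] :
    FiniteDimensional K (peirceSpace K (e + f) (e + f)) := by
  have := finiteDimensional_peirceSpace (K := K) hA he hf
  have := finiteDimensional_peirceSpace (K := K) hA hf he
  let V := (peirceSpace K e e ⊔ peirceSpace K e f) ⊔ (peirceSpace K f e ⊔ peirceSpace K f f)
  refine Submodule.finiteDimensional_of_le (S₂ := V) ?_
  rintro _ ⟨x, rfl⟩
  have hsplit : (e + f) * (x * (e + f))
      = (e * x * e + e * x * f) + (f * x * e + f * x * f) := by noncomm_ring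
  simp only [LinearMap.comp_apply, LinearMap.mulLeft_apply, LinearMap.mulRight_apply, hsplit]
  apply_rules [Submodule.add_mem_sup, mul_mul_mem_peirceSpace]

/- Cayley–Hamilton for left multiplication by `a` on `W` annihilates `1`, hence `a` itself. -/
lemma encard_spectrum_le_finrank {a : A} (W : Submodule K A) [FiniteDimensional K W]
    (h1 : 1 ∈ W) (ha : ∀ w ∈ W, a * w ∈ W) :
    (spectrum K a).encard ≤ Module.finrank K W := by
  classical
  let T : Module.End K W := (LinearMap.mulLeft K a).restrict ha
  have hT (P : K[X]) (w : W) : (aeval T P w : A) = aeval a P * w := by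
    induction P using Polynomial.induction_on' generalizing w with
    | add P Q hP hQ => simp [hP, hQ, add_mul]
    | monomial k c =>
      induction k generalizing w with
      | zero => simp [Algebra.smul_def]
      | succ k ih =>
        have hTw : (T w : A) = a * w := rfl
        simpa [pow_succ, mul_assoc, hTw] using ih (T w)
  have haeval : aeval a T.charpoly = 0 := by
    simpa [LinearMap.aeval_self_charpoly] using (hT T.charpoly ⟨1, h1⟩).symm
  have hroots : spectrum K a ⊆ T.charpoly.roots.toFinset := by
    intro c hc
    have hmem : T.charpoly.eval c ∈ spectrum K (0 : A) :=
      haeval ▸ spectrum.subset_polynomial_aeval a T.charpoly ⟨c, hc, rfl⟩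
    have hroot : T.charpoly.eval c = 0 := spectrum_zero_subset hmem
    simpa [T.charpoly_monic.ne_zero] using hroot
  calc (spectrum K a).encard ≤ (T.charpoly.roots.toFinset : Set K).encard :=
        Set.encard_le_encard hroots
    _ = T.charpoly.roots.toFinset.card := Set.encard_coe_eq_coe_finsetCard _
    _ ≤ Module.finrank K W := by
        rw [← T.charpoly_natDegree]
        exact_mod_cast (Multiset.toFinset_card_le _).trans (card_roots' _)

end PeirceSpace

section SpectralRank

variable {A : Type*} [Ring A] [Algebra ℂ A]

lemma spectralRank_mul_left_le (x a : A) : spectralRank (x * a) ≤ spectralRank a :=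
  iSup_le fun y ↦ by
    rw [← mul_assoc]
    exact le_iSup (fun z ↦ (spectrum ℂ (z * a) \ {0}).encard) (y * x)

lemma spectralRank_mul_right_le (a x : A) : spectralRank (a * x) ≤ spectralRank a :=
  iSup_le fun y ↦ by
    rw [← mul_assoc, spectrum.nonzero_mul_comm, ← mul_assoc]
    exact le_iSup (fun z ↦ (spectrum ℂ (z * a) \ {0}).encard) (x * y)

lemma encard_spectrum_diff_zero_le_spectralRank (a : A) :
    (spectrum ℂ a \ {0}).encard ≤ spectralRank a := by
  simpa only [one_mul, spectralRank] using le_iSup (fun z ↦ (spectrum ℂ (z * a) \ {0}).encard) 1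

lemma finite_spectrum_diff_zero {a : A} (ha : spectralRank a < ⊤) :
    (spectrum ℂ a \ {0}).Finite :=
  Set.encard_lt_top_iff.1 ((encard_spectrum_diff_zero_le_spectralRank a).trans_lt ha)

/- A new eigenvalue `c` on the complement `q - e` enlarges the nonzero spectrum of any `e * x * e`
by one point. -/
lemma spectralRank_lt_spectralRank {e q : A} (he : IsIdempotentElem e) (hq : IsIdempotentElem q)
    (hqe : q * e = e) (heq : e * q = e) (hne : e ≠ q) (hrank : spectralRank e < ⊤) :
    spectralRank e < spectralRank q := by
  rw [← ENat.add_one_le_iff hrank.ne, spectralRank, ENat.iSup_add]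
  refine iSup_le fun x ↦ ?_
  rw [spectrum_mul_idempotent_diff_zero he]
  have hfin : (spectrum ℂ (e * x * e) \ {0}).Finite :=
    finite_spectrum_diff_zero ((spectralRank_mul_left_le _ e).trans_lt hrank)
  obtain ⟨c, hc⟩ := (hfin.insert 0).exists_notMem
  obtain ⟨hc0, hcx⟩ : c ≠ 0 ∧ c ∉ spectrum ℂ (e * x * e) \ {0} := by
    simpa only [Set.mem_insert_iff, not_or] using hc
  let z := e * x * e + c • (q - e)
  have hez : e * z = e * x * e := by
    simp [z, mul_add, mul_sub, heq, he.eq, ← mul_assoc]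
  have hze : z * e = e * x * e := by
    simp [z, add_mul, sub_mul, hqe, he.eq, mul_assoc]
  have hzq : z * q = z := by
    simp [z, add_mul, sub_mul, hq.eq, heq, mul_assoc]
  have hz_compl : z * (q - e) = c • (q - e) := by
    rw [mul_sub, hzq, hze, add_sub_cancel_left]
  have hsub : insert c (spectrum ℂ (e * x * e) \ {0}) ⊆ spectrum ℂ z \ {0} :=
    Set.insert_subset ⟨mem_spectrum_of_mul_eq_smul (sub_ne_zero.2 hne.symm) hz_compl, hc0⟩ <|
      hez ▸ spectrum_idempotent_mul_diff_zero_subset he (hez.trans hze.symm)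
  calc (spectrum ℂ (e * x * e) \ {0}).encard + 1
      = (insert c (spectrum ℂ (e * x * e) \ {0})).encard :=
        (Set.encard_insert_of_notMem hcx).symm
    _ ≤ (spectrum ℂ z \ {0}).encard := Set.encard_le_encard hsub
    _ ≤ spectralRank (z * q) := hzq.symm ▸ encard_spectrum_diff_zero_le_spectralRank z
    _ ≤ spectralRank q := spectralRank_mul_left_le z q

lemma spectralRank_lt_top_of_finiteDimensional {e : A} (he : IsIdempotentElem e)
    [FiniteDimensional ℂ (peirceSpace ℂ e e)] : spectralRank e < ⊤ := by
  let W : Submodule ℂ A := Submodule.span ℂ {1} ⊔ peirceSpace ℂ e e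
  refine lt_of_le_of_lt (iSup_le fun x ↦ ?_) (ENat.natCast_lt_top (Module.finrank ℂ W))
  rw [spectrum_mul_idempotent_diff_zero he]
  refine (Set.encard_le_encard Set.sdiff_subset).trans (encard_spectrum_le_finrank W ?_ ?_)
  · exact Submodule.mem_sup_left (Submodule.mem_span_singleton_self 1)
  · intro w hw
    refine Submodule.mem_sup_right ?_
    obtain ⟨_, h1, _, ⟨y, rfl⟩, rfl⟩ := Submodule.mem_sup.1 hw
    obtain ⟨c, rfl⟩ := Submodule.mem_span_singleton.1 h1
    have hsplit : e * x * e * (c • 1 + e * (y * e)) = e * (c • x + x * e * e * y) * e := by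
      simp only [mul_add, add_mul, mul_smul_comm, smul_mul_assoc, mul_one, mul_assoc]
    exact hsplit ▸ mul_mul_mem_peirceSpace _ _ _

end SpectralRank

section SpectralRadius

open Finset.HasAntidiagonal (antidiagonal mem_antidiagonal)

variable {A : Type*} [NormedRing A] [NormedAlgebra ℂ A]

lemma spectralRadius_eq_zero_iff {a : A} : spectralRadius ℂ a = 0 ↔ spectrum ℂ a \ {0} = ∅ := by
  simp [spectralRadius, Set.sdiff_eq_empty, Set.subset_def]

lemma spectralRadius_ne_zero_of_isIdempotentElem {e : A} (he : IsIdempotentElem e) (he0 : e ≠ 0) :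
    spectralRadius ℂ e ≠ 0 := fun h ↦
  (spectralRadius_eq_zero_iff.1 h).subset
    ⟨one_mem_spectrum_of_isIdempotentElem he he0, one_ne_zero⟩

variable [CompleteSpace A]

lemma spectralRadius_mul_le_of_commute {a b : A} (hab : Commute a b) :
    spectralRadius ℂ (a * b) ≤ spectralRadius ℂ a * spectralRadius ℂ b := by
  have hfin (x : A) : spectralRadius ℂ x ≠ ⊤ :=
    ((spectrum.spectralRadius_le_pow_nnnorm_pow_one_div ℂ x 0).trans_lt <| by
      simp [ENNReal.mul_lt_top]).ne
  have hgelfand := spectrum.pow_nnnorm_pow_one_div_tendsto_nhds_spectralRadius (A := A)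
  refine le_of_tendsto_of_tendsto' (hgelfand (a * b))
    (ENNReal.Tendsto.mul (hgelfand a) (.inr (hfin b)) (hgelfand b) (.inr (hfin a))) fun k ↦ ?_
  rw [← ENNReal.mul_rpow_of_nonneg _ _ (by positivity), hab.mul_pow]
  gcongr
  exact_mod_cast nnnorm_mul_le _ _

lemma spectralRadius_coe (B : Subalgebra ℂ A) [CompleteSpace B] (b : B) :
    spectralRadius ℂ b = spectralRadius ℂ (b : A) :=
  tendsto_nhds_unique (spectrum.pow_nnnorm_pow_one_div_tendsto_nhds_spectralRadius b)
    (spectrum.pow_nnnorm_pow_one_div_tendsto_nhds_spectralRadius (b : A))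

lemma eventually_norm_pow_le_pow_of_spectralRadius_lt {a : A} {r : ℝ} (hr : 0 ≤ r)
    (ha : spectralRadius ℂ a < ENNReal.ofReal r) : ∀ᶠ k : ℕ in atTop, ‖a ^ k‖ ≤ r ^ k := by
  have hlim := spectrum.pow_norm_pow_one_div_tendsto_nhds_spectralRadius a
  filter_upwards [hlim.eventually (gt_mem_nhds ha), eventually_ne_atTop 0] with k hk hk0
  calc ‖a ^ k‖ = (‖a ^ k‖ ^ (1 / k : ℝ)) ^ k := by
        rw [one_div, Real.rpow_inv_natCast_pow (norm_nonneg _) hk0]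
    _ ≤ r ^ k := by
        gcongr
        exact (ENNReal.ofReal_le_ofReal_iff hr).1 hk.le

lemma catalan_le_four_pow (k : ℕ) : catalan k ≤ 4 ^ k := by
  rw [catalan_eq_centralBinom_div]
  exact (Nat.div_le_self _ _).trans (Nat.centralBinom_le_four_pow k)

lemma summable_norm_catalan_smul_pow {a : A} (ha : spectralRadius ℂ a < 4⁻¹) :
    Summable fun k ↦ ‖(catalan k : ℂ) • a ^ k‖ := by
  obtain ⟨r, har, hr⟩ := ENNReal.lt_iff_exists_nnreal_btwn.1 ha
  have hr4 : 4 * (r : ℝ) < 1 := by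
    have : (r : ℝ) < 4⁻¹ := by
      simpa using (ENNReal.toReal_lt_toReal ENNReal.coe_ne_top (by simp)).2 hr
    linarith
  refine Summable.of_norm_bounded_eventually_nat
    (summable_geometric_of_lt_one (by positivity) hr4) ?_
  have hpow := eventually_norm_pow_le_pow_of_spectralRadius_lt r.2 (by simpa using har)
  filter_upwards [hpow] with k hk
  rw [norm_norm, norm_smul, Complex.norm_natCast, mul_pow]
  refine mul_le_mul ?_ hk (norm_nonneg _) (by positivity)
  exact_mod_cast catalan_le_four_pow k

lemma exists_eq_one_add_mul_sq {a : A} (ha : spectralRadius ℂ a < 4⁻¹) :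
    ∃ c : A, c = 1 + a * c ^ 2 := by
  let f (k : ℕ) : A := (catalan k : ℂ) • a ^ k
  have hf : Summable fun k ↦ ‖f k‖ := summable_norm_catalan_smul_pow ha
  have hrec (k : ℕ) : f (k + 1) = a * ∑ ij ∈ antidiagonal k, f ij.1 * f ij.2 := by
    simp only [f, catalan_succ', Finset.mul_sum, Nat.cast_sum, Finset.sum_smul]
    refine Finset.sum_congr rfl fun ij hij ↦ ?_
    rw [← mem_antidiagonal.1 hij, smul_mul_smul_comm, ← pow_add, mul_smul_comm, pow_succ',
      Nat.cast_mul]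
  refine ⟨∑' k, f k, ?_⟩
  calc ∑' k, f k = f 0 + ∑' k, f (k + 1) := hf.of_norm.tsum_eq_zero_add
    _ = 1 + a * ∑' k, ∑ ij ∈ antidiagonal k, f ij.1 * f ij.2 := by
        simp_rw [hrec]
        rw [(summable_norm_sum_mul_antidiagonal_of_summable_norm hf hf).of_norm.tsum_mul_left]
        simp [f]
    _ = 1 + a * (∑' k, f k) ^ 2 := by
        rw [sq, tsum_mul_tsum_eq_tsum_sum_antidiagonal_of_summable_norm hf hf]

end SpectralRadius

section RieszIdempotent

lemma exists_isIdempotentElem_mul_of_sub_sq {B : Type*} [NormedCommRing B] [NormedAlgebra ℂ B]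
    [CompleteSpace B] {c : B} (hn : spectralRadius ℂ (c - c ^ 2) = 0)
    (hc : spectralRadius ℂ c ≠ 0) : ∃ g : B, IsIdempotentElem (c * g) ∧ c * g ≠ 0 := by
  obtain ⟨C, hC⟩ := exists_eq_one_add_mul_sq (a := c - c ^ 2) (by simp [hn])
  let w := (c - c ^ 2) * C
  have hw : w - w ^ 2 = c - c ^ 2 := by
    linear_combination (c - c ^ 2) * hC
  have hw0 : spectralRadius ℂ w = 0 := nonpos_iff_eq_zero.1 <|
    (spectralRadius_mul_le_of_commute (Commute.all _ C)).trans_eq (by rw [hn, zero_mul])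
  obtain ⟨u, hu⟩ : IsUnit (1 - (2 : ℂ) • w) :=
    spectrum.isUnit_one_sub_smul_of_lt_inv_radius (by simp [hw0])
  have hu_inv : (1 - 2 * w) * (↑u⁻¹ : B) = 1 := by
    simpa only [hu, Algebra.smul_def, map_ofNat] using u.mul_inv
  have hcg : c * ((1 - (1 - c) * C) * ↑u⁻¹) = (c - w) * ↑u⁻¹ := by
    simp only [w]
    ring
  refine ⟨(1 - (1 - c) * C) * ↑u⁻¹, ?_, ?_⟩
  · rw [hcg, IsIdempotentElem]
    linear_combination ((c - w) * ↑u⁻¹) * hu_inv + (↑u⁻¹ : B) ^ 2 * hw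
  · rw [hcg, Ne, Units.mul_left_eq_zero, sub_eq_zero]
    exact fun hcw ↦ hc (hcw ▸ hw0)

lemma exists_mul_eval_eq_one {s : Set ℂ} (hs : (s \ {0}).Finite) :
    ∃ P : ℂ[X], ∀ z ∈ s, z ≠ 0 → z * P.eval z = 1 := by
  classical
  refine ⟨Lagrange.interpolate hs.toFinset id fun z ↦ z⁻¹, fun z hz hz0 ↦ ?_⟩
  have hmem : z ∈ hs.toFinset := hs.mem_toFinset.2 ⟨hz, hz0⟩
  have heval := Lagrange.eval_interpolate_at_node (fun z ↦ z⁻¹) (Set.injOn_id _) hmem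
  rw [id_eq] at heval
  rw [heval, mul_inv_cancel₀ hz0]

variable {A : Type*} [NormedRing A] [NormedAlgebra ℂ A]

noncomputable instance normedCommRingElemental (d : A) :
    NormedCommRing (Algebra.elemental ℂ d) where
  mul_comm := mul_comm

lemma exists_isIdempotentElem_mul [CompleteSpace A] {d : A} (hfin : (spectrum ℂ d \ {0}).Finite)
    (hd : spectralRadius ℂ d ≠ 0) :
    ∃ y, Commute d y ∧ IsIdempotentElem (d * y) ∧ d * y ≠ 0 := by
  obtain ⟨l, hl, hl0⟩ : (spectrum ℂ d \ {0}).Nonempty :=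
    Set.nonempty_iff_ne_empty.2 (mt spectralRadius_eq_zero_iff.2 hd)
  obtain ⟨P, hP⟩ := exists_mul_eval_eq_one hfin
  let d' : Algebra.elemental ℂ d := ⟨d, Algebra.elemental.self_mem ℂ d⟩
  let c' := aeval d' (X * P)
  have hc' : (c' : A) = aeval d (X * P) := aeval_subalgebra_coe _ _ _
  have hn : spectralRadius ℂ (c' - c' ^ 2) = 0 := by
    rw [spectralRadius_coe, spectralRadius_eq_zero_iff]
    push_cast
    rw [hc', ← map_pow, ← map_sub, spectrum.map_polynomial_aeval_of_nonempty _ _ ⟨l, hl⟩,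
      Set.sdiff_eq_empty]
    rintro _ ⟨z, hz, rfl⟩
    obtain rfl | hz0 := eq_or_ne z 0
    · simp
    · simp [hP z hz hz0]
  have hc : spectralRadius ℂ c' ≠ 0 := by
    have h1 : (1 : ℂ) ∈ spectrum ℂ (c' : A) := hc' ▸
      spectrum.subset_polynomial_aeval d (X * P) ⟨l, hl, by simp [hP l hl hl0]⟩
    rw [spectralRadius_coe, Ne, spectralRadius_eq_zero_iff]
    exact fun h ↦ h.subset ⟨h1, one_ne_zero⟩
  obtain ⟨g, hg, hg0⟩ := exists_isIdempotentElem_mul_of_sub_sq hn hc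
  have hcg : c' * g = d' * (aeval d' P * g) := by simp [c', mul_assoc]
  rw [hcg] at hg hg0
  exact ⟨(aeval d' P * g : Algebra.elemental ℂ d), congrArg Subtype.val (mul_comm d' _),
    congrArg Subtype.val hg, fun h ↦ hg0 (Subtype.ext h)⟩

end RieszIdempotent

section FiniteRankIdempotents

/-- Semisimplicity in spectral form: the radical `{a | ∀ x, r(x * a) = 0}` of the algebra is zero,
`r` denoting the spectral radius. -/
def IsSpectrallySemisimple (A : Type*) [NormedRing A] [NormedAlgebra ℂ A] : Prop :=
  ∀ a : A, (∀ x : A, spectralRadius ℂ (x * a) = 0) → a = 0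

variable {A : Type*} [NormedRing A] [NormedAlgebra ℂ A]

lemma IsSpectrallySemisimple.eq_zero_of_mul_mul_eq_zero (hA : IsSpectrallySemisimple A) {a : A}
    (ha : ∀ x, a * x * a = 0) : a = 0 := by
  refine hA a fun x ↦ ?_
  have hsq : (x * a) ^ 2 = 0 := by rw [sq, mul_assoc, ← mul_assoc a, ha, mul_zero]
  have hpow := spectrum.spectralRadius_pow_le (𝕜 := ℂ) (x * a) 2 two_ne_zero
  rw [hsq, spectrum.spectralRadius_zero, nonpos_iff_eq_zero] at hpow
  exact eq_zero_of_pow_eq_zero hpow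

/-- An idempotent is primitive if it is nonzero and has no proper nonzero subidempotent. -/
structure IsPrimitiveIdempotent {A : Type*} [MulZeroClass A] (e : A) : Prop where
  isIdempotentElem : IsIdempotentElem e
  ne_zero : e ≠ 0
  eq_of_ne_zero : ∀ f, IsIdempotentElem f → e * f = f → f * e = f → f ≠ 0 → f = e

variable [CompleteSpace A]

namespace IsPrimitiveIdempotent

variable {e : A}

lemma exists_commute_mul_eq (he : IsPrimitiveIdempotent e) (hrank : spectralRank e < ⊤) {z : A}
    (hez : e * z = z) (hze : z * e = z) (hz : spectralRadius ℂ z ≠ 0) :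
    ∃ y, Commute z y ∧ z * y = e := by
  have hzrank : spectralRank z < ⊤ := hze ▸ (spectralRank_mul_left_le z e).trans_lt hrank
  obtain ⟨y, hzy, hidem, hne⟩ := exists_isIdempotentElem_mul (finite_spectrum_diff_zero hzrank) hz
  refine ⟨y, hzy, he.eq_of_ne_zero _ hidem ?_ ?_ hne⟩
  · rw [← mul_assoc, hez]
  · rw [hzy.eq, mul_assoc, hze]

lemma spectralRadius_ne_zero (hA : IsSpectrallySemisimple A) (he : IsPrimitiveIdempotent e)
    (hrank : spectralRank e < ⊤) {z : A} (hez : e * z = z) (hze : z * e = z) (hz : z ≠ 0) :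
    spectralRadius ℂ z ≠ 0 := by
  intro hz0
  obtain ⟨x, hx⟩ := not_forall.1 (mt (hA z) hz)
  have hexz : spectralRadius ℂ (e * x * z) ≠ 0 := by
    have hdiff : spectrum ℂ (x * z) \ {0} = spectrum ℂ (e * x * z) \ {0} := by
      simpa only [mul_assoc, hze] using
        spectrum_mul_idempotent_diff_zero (K := ℂ) he.isIdempotentElem (x * z)
    rwa [spectralRadius_eq_zero_iff, hdiff, ← spectralRadius_eq_zero_iff] at hx
  obtain ⟨y, hcomm, hy⟩ := he.exists_commute_mul_eq hrank
    (by simp only [← mul_assoc, he.isIdempotentElem.eq]) (by rw [mul_assoc, hze]) hexz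
  let v := y * e * x * e
  have hvz : v * z = e := by
    calc v * z = y * (e * x * (e * z)) := by simp only [v, mul_assoc]
      _ = e := by rw [hez, ← hcomm.eq, hy]
  have hzv : z * v = e := by
    refine he.eq_of_ne_zero _ ?_ ?_ ?_ fun h ↦ hz ?_
    · rw [IsIdempotentElem, mul_assoc, ← mul_assoc v, hvz, ← mul_assoc, hze]
    · rw [← mul_assoc, hez]
    · simp only [v, mul_assoc, he.isIdempotentElem.eq]
    · rw [← hze, ← hvz, ← mul_assoc, h, zero_mul]
  have he0 := spectralRadius_mul_le_of_commute (hzv.trans hvz.symm : Commute z v)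
  rw [hzv, hz0, zero_mul, nonpos_iff_eq_zero] at he0
  exact spectralRadius_ne_zero_of_isIdempotentElem he.isIdempotentElem he.ne_zero he0

/- Gelfand–Mazur: if `c ≠ 0` lies in the spectrum of `z ∈ eAe` then `c • e - z` is not invertible in
the division algebra `eAe`. -/
lemma exists_eq_smul (hA : IsSpectrallySemisimple A) (he : IsPrimitiveIdempotent e)
    (hrank : spectralRank e < ⊤) {z : A} (hez : e * z = z) (hze : z * e = z) :
    ∃ c : ℂ, z = c • e := by
  obtain rfl | hz := eq_or_ne z 0
  · exact ⟨0, (zero_smul ℂ e).symm⟩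
  have hspec := mt spectralRadius_eq_zero_iff.2 (he.spectralRadius_ne_zero hA hrank hez hze hz)
  obtain ⟨c, hc, hc0⟩ := Set.nonempty_iff_ne_empty.2 hspec
  refine ⟨c, by_contra fun hne ↦ hc (spectrum.mem_resolventSet_iff.2 ?_)⟩
  have hed : e * (c • e - z) = c • e - z := by
    rw [mul_sub, mul_smul_comm, he.isIdempotentElem.eq, hez]
  have hde : (c • e - z) * e = c • e - z := by
    rw [sub_mul, smul_mul_assoc, he.isIdempotentElem.eq, hze]
  obtain ⟨y, hcomm, hy⟩ := he.exists_commute_mul_eq hrank hed hde <|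
    he.spectralRadius_ne_zero hA hrank hed hde (sub_ne_zero.2 (Ne.symm hne))
  have hsplit : algebraMap ℂ A c - z = c • (1 - e) + (c • e - z) := by
    rw [Algebra.algebraMap_eq_smul_one, smul_sub]
    abel
  exact hsplit ▸ isUnit_smul_one_sub_add he.isIdempotentElem hc0 hed hde hcomm hy

lemma finiteDimensional_peirceSpace (hA : IsSpectrallySemisimple A)
    (he : IsPrimitiveIdempotent e) (hrank : spectralRank e < ⊤) :
    FiniteDimensional ℂ (peirceSpace ℂ e e) := by
  refine Submodule.finiteDimensional_of_le (S₂ := Submodule.span ℂ {e}) fun z hz ↦ ?_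
  obtain ⟨hez, hze⟩ := (mem_peirceSpace_iff he.isIdempotentElem he.isIdempotentElem).1 hz
  obtain ⟨c, rfl⟩ := he.exists_eq_smul hA hrank hez hze
  exact Submodule.smul_mem _ c (Submodule.mem_span_singleton_self e)

end IsPrimitiveIdempotent

/- A non-primitive idempotent splits as the sum of two idempotents of smaller rank. -/
lemma finiteDimensional_peirceSpace_of_spectralRank_lt_top (hA : IsSpectrallySemisimple A) {e : A}
    (he : IsIdempotentElem e) (hrank : spectralRank e < ⊤) :
    FiniteDimensional ℂ (peirceSpace ℂ e e) := by
  induction hr : spectralRank e using WellFoundedLT.induction generalizing e with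
  | ind r ih =>
  subst hr
  obtain rfl | he0 := eq_or_ne e 0
  · have : peirceSpace ℂ (0 : A) 0 = ⊥ := by ext; simp [mem_peirceSpace_iff he he, eq_comm]
    exact this ▸ inferInstance
  by_cases hprim : IsPrimitiveIdempotent e
  · exact hprim.finiteDimensional_peirceSpace hA hrank
  obtain ⟨f, hf, hef, hfe, hf0, hne⟩ : ∃ f, IsIdempotentElem f ∧ e * f = f ∧ f * e = f ∧ f ≠ 0 ∧
      f ≠ e := by
    by_contra! h
    exact hprim ⟨he, he0, h⟩
  have ih_sub {g : A} (hg : IsIdempotentElem g) (heg : e * g = g) (hge : g * e = g)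
      (hne : g ≠ e) : FiniteDimensional ℂ (peirceSpace ℂ g g) := by
    have hgrank : spectralRank g < ⊤ := heg ▸ (spectralRank_mul_right_le e g).trans_lt hrank
    exact ih _ (spectralRank_lt_spectralRank hg he heg hge hne hgrank) hg hgrank rfl
  have hsub : IsIdempotentElem (e - f) := by
    rw [IsIdempotentElem, mul_sub, sub_mul, sub_mul, he.eq, hef, hfe, hf.eq, sub_self, sub_zero]
  have := ih_sub hf hef hfe hne
  have := ih_sub hsub (by rw [mul_sub, he.eq, hef]) (by rw [sub_mul, he.eq, hfe]) (by simpa)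
  have hsum := finiteDimensional_peirceSpace_add (K := ℂ)
    (fun _ ↦ hA.eq_zero_of_mul_mul_eq_zero) hf hsub
  rwa [add_sub_cancel] at hsum

lemma spectralRank_add_lt_top (hA : IsSpectrallySemisimple A) {e f : A}
    (he : IsIdempotentElem e) (hf : IsIdempotentElem f) (hef : e * f = 0) (hfe : f * e = 0)
    (hre : spectralRank e < ⊤) (hrf : spectralRank f < ⊤) : spectralRank (e + f) < ⊤ := by
  have := finiteDimensional_peirceSpace_of_spectralRank_lt_top hA he hre
  have := finiteDimensional_peirceSpace_of_spectralRank_lt_top hA hf hrf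
  have := finiteDimensional_peirceSpace_add (K := ℂ)
    (fun _ ↦ hA.eq_zero_of_mul_mul_eq_zero) he hf
  exact spectralRank_lt_top_of_finiteDimensional (he.add hf (by rw [hef, hfe, add_zero]))

end FiniteRankIdempotents

section MaximalIdempotents

lemma exists_isIdempotentElem_spectralRank_maximal {A : Type*} [Ring A] [Algebra ℂ A] {n : ℕ}
    (hn : ∀ a : A, spectralRank a < ⊤ → spectralRank a ≤ n) :
    ∃ p : A, IsIdempotentElem p ∧ spectralRank p < ⊤ ∧
      ∀ q : A, IsIdempotentElem q → spectralRank q < ⊤ → spectralRank q ≤ spectralRank p := by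
  let R : Set ℕ∞ := spectralRank '' {q : A | IsIdempotentElem q ∧ spectralRank q < ⊤}
  have hzero : spectralRank (0 : A) < ⊤ := by
    simp [spectralRank, Set.sdiff_eq_empty.2 spectrum_zero_subset]
  have : Nonempty R := ⟨_, 0, ⟨IsIdempotentElem.zero, hzero⟩, rfl⟩
  have hR : sSup R < ⊤ := by
    refine (sSup_le ?_).trans_lt (ENat.natCast_lt_top n)
    rintro _ ⟨q, hq, rfl⟩
    exact hn q hq.2
  obtain ⟨p, ⟨hp, hrank⟩, hsup⟩ := ENat.sSup_mem_of_nonempty_of_lt_top hR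
  exact ⟨p, hp, hrank, fun q hq hqrank ↦ hsup ▸ le_sSup ⟨q, ⟨hq, hqrank⟩, rfl⟩⟩

variable {A : Type*} [NormedRing A] [NormedAlgebra ℂ A] {p : A}

lemma spectralRadius_eq_zero_of_orthogonal [CompleteSpace A] (hA : IsSpectrallySemisimple A)
    (hp : IsIdempotentElem p) (hrank : spectralRank p < ⊤)
    (hmax : ∀ q : A, IsIdempotentElem q → spectralRank q < ⊤ → spectralRank q ≤ spectralRank p)
    {d : A} (hd : spectralRank d < ⊤) (hpd : p * d = 0) (hdp : d * p = 0) :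
    spectralRadius ℂ d = 0 := by
  by_contra hd0
  obtain ⟨y, hcomm, hq, hq0⟩ := exists_isIdempotentElem_mul (finite_spectrum_diff_zero hd) hd0
  have hpq : p * (d * y) = 0 := by rw [← mul_assoc, hpd, zero_mul]
  have hqp : d * y * p = 0 := by rw [hcomm.eq, mul_assoc, hdp, mul_zero]
  have hadd : IsIdempotentElem (p + d * y) := hp.add hq (by rw [hpq, hqp, add_zero])
  have hlt : spectralRank p < spectralRank (p + d * y) :=
    spectralRank_lt_spectralRank hp hadd (by rw [add_mul, hp.eq, hqp, add_zero])
      (by rw [mul_add, hp.eq, hpq, add_zero]) (by simpa using hq0) hrank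
  exact hlt.not_ge <| hmax _ hadd <| spectralRank_add_lt_top hA hp hq hpq hqp hrank <|
    (spectralRank_mul_right_le d y).trans_lt hd

/- For `b = 1 - p` the elements `x * (b * a)` and `x * (a * b)` have the same nonzero spectrum as
`b * (a * x) * b` and `b * (x * a) * b`, which are orthogonal to `p`. -/
lemma mul_eq_self_of_spectralRadius_eq_zero (hA : IsSpectrallySemisimple A)
    (hp : IsIdempotentElem p)
    (horth : ∀ d : A, spectralRank d < ⊤ → p * d = 0 → d * p = 0 → spectralRadius ℂ d = 0)
    {a : A} (ha : spectralRank a < ⊤) : p * a = a ∧ a * p = a := by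
  have hcompl (x : A) (hx : spectralRank x < ⊤) : spectralRadius ℂ (x * (1 - p)) = 0 := by
    rw [spectralRadius_eq_zero_iff, spectrum_mul_idempotent_diff_zero hp.one_sub,
      ← spectralRadius_eq_zero_iff]
    refine horth _ ?_ ?_ ?_
    · exact (spectralRank_mul_right_le _ _).trans_lt ((spectralRank_mul_left_le _ _).trans_lt hx)
    · rw [← mul_assoc, ← mul_assoc, hp.mul_one_sub_self, zero_mul, zero_mul]
    · rw [mul_assoc, hp.one_sub_mul_self, mul_zero]
  have hleft : (1 - p) * a = 0 := hA _ fun x ↦ by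
    rw [spectralRadius_eq_zero_iff, spectrum.nonzero_mul_comm, mul_assoc,
      spectrum.nonzero_mul_comm, ← spectralRadius_eq_zero_iff]
    exact hcompl _ ((spectralRank_mul_right_le a x).trans_lt ha)
  have hright : a * (1 - p) = 0 := hA _ fun x ↦ by
    rw [← mul_assoc]
    exact hcompl _ ((spectralRank_mul_left_le x a).trans_lt ha)
  rw [sub_mul, one_mul, sub_eq_zero] at hleft
  rw [mul_sub, mul_one, sub_eq_zero] at hright
  exact ⟨hleft.symm, hright.symm⟩

end MaximalIdempotents

theorem stmt2 {A : Type*} [NormedRing A] [NormedAlgebra ℂ A] [CompleteSpace A]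
    (hss : ∀ a : A, (∀ x : A, spectralRadius ℂ (x * a) = 0) → a = 0)
    (S : Set A) (hS : S = {a : A | spectralRank a < ⊤})
    (n : ℕ) (hbound : ∀ a ∈ S, spectralRank a ≤ (n : ℕ∞)) :
    ∃ p ∈ S, p * p = p ∧ S = {y : A | ∃ x : A, y = p * x * p} := by
  subst hS
  obtain ⟨p, hp, hrank, hmax⟩ := exists_isIdempotentElem_spectralRank_maximal hbound
  refine ⟨p, hrank, hp, Set.Subset.antisymm (fun a ha ↦ ⟨a, ?_⟩) ?_⟩
  · obtain ⟨hpa, hap⟩ := mul_eq_self_of_spectralRadius_eq_zero hss hp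
      (fun d ↦ spectralRadius_eq_zero_of_orthogonal hss hp hrank hmax) ha
    rw [hpa, hap]
  · rintro _ ⟨x, rfl⟩
    exact (spectralRank_mul_left_le (p * x) p).trans_lt hrank
end

section
/- Let A be a semisimple unital complex Banach algebra and let S denote the set of finite-rank elements of A (= Soc A). Suppose S equals the two-sided ideal J_p generated by some minimal projection p (a nonzero idempotent with p·A·p = ℂ·p). Then S is a minimal two-sided ideal of A: every two-sided ideal I of A with {0} ≠ I ⊆ S satisfies I = S. -/
open scoped ENNReal

/-- The two-sided ideal generated by `p`: all finite sums `∑ xⱼ·p·yⱼ`. -/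
def idealGen {A : Type*} [Ring A] (p : A) : Set A :=
  {a : A | ∃ (n : ℕ) (x y : Fin n → A), a = ∑ j, x j * p * y j}

/-!
In a semiprime ring a nonzero `b ∈ J_p` satisfies `p·x·b·y·p ≠ 0` for some `x`, `y`: otherwise
`J_p·b·J_p = 0`, so the ideal generated by `b` is nilpotent. Since `p·A·p = ℂ·p`, this element is a
nonzero multiple of `p`, so every two-sided ideal containing `b` contains `p`. A semisimple Banach
algebra is semiprime: if `a·A·a = 0`, then every `x·a` squares to zero, so its spectral radius is
zero.
-/

/-- A ring is semiprime if `0` is the only `a` with `a·A·a = 0`, equivalently if it has no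
nonzero nilpotent ideal. This is the ring-theoretic form in which semisimplicity is used. -/
def IsSemiprimeRing (A : Type*) [Ring A] : Prop :=
  ∀ a : A, (∀ x : A, a * x * a = 0) → a = 0

section Spectrum

variable {𝕜 A : Type*} [NormedField 𝕜] [Ring A] [Algebra 𝕜 A]

theorem spectralRadius_eq_zero_of_isNilpotent {a : A} (ha : IsNilpotent a) :
    spectralRadius 𝕜 a = 0 := by
  obtain ⟨n, hn⟩ := ha
  have hpow : spectralRadius 𝕜 a ^ (n + 1) ≤ 0 :=
    calc spectralRadius 𝕜 a ^ (n + 1)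
        ≤ spectralRadius 𝕜 (a ^ (n + 1)) := spectrum.spectralRadius_pow_le a (n + 1) n.succ_ne_zero
      _ = 0 := by rw [pow_eq_zero_of_le n.le_succ hn, spectrum.spectralRadius_zero]
  exact eq_zero_of_pow_eq_zero (nonpos_iff_eq_zero.mp hpow)

theorem isSemiprimeRing_of_forall_spectralRadius_mul_eq_zero
    (h : ∀ a : A, (∀ x : A, spectralRadius 𝕜 (x * a) = 0) → a = 0) : IsSemiprimeRing A := by
  refine fun a ha => h a fun x => spectralRadius_eq_zero_of_isNilpotent ⟨2, ?_⟩
  calc (x * a) ^ 2 = x * (a * x * a) := by noncomm_ring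
    _ = 0 := by rw [ha, mul_zero]

end Spectrum

section Ideal

variable {A : Type*} [Ring A] {p : A}

theorem mul_mul_eq_zero_of_mem_idealGen {a b c : A} (ha : a ∈ idealGen p) (hc : c ∈ idealGen p)
    (h : ∀ x y : A, p * (x * b * y) * p = 0) : a * b * c = 0 := by
  obtain ⟨m, s, t, rfl⟩ := ha
  obtain ⟨n, u, v, rfl⟩ := hc
  simp only [Finset.sum_mul, Finset.mul_sum]
  refine Finset.sum_eq_zero fun j _ => Finset.sum_eq_zero fun i _ => ?_
  calc s i * p * t i * b * (u j * p * v j)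
      = s i * (p * (t i * b * u j) * p) * v j := by simp only [mul_assoc]
    _ = 0 := by rw [h, mul_zero, zero_mul]

theorem IsSemiprimeRing.exists_mul_mul_mul_mul_ne_zero (hA : IsSemiprimeRing A) {b : A}
    (hb : b ∈ idealGen p) (hb0 : b ≠ 0) : ∃ x y : A, p * (x * b * y) * p ≠ 0 := by
  by_contra! h
  have hcube (x y : A) : b * (x * b * y) * b = 0 :=
    mul_mul_eq_zero_of_mem_idealGen hb hb fun s t => by
      simpa only [mul_assoc] using h (s * x) (y * t)
  refine hb0 (hA b fun x => hA (b * x * b) fun y => ?_)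
  calc b * x * b * y * (b * x * b) = b * (x * b * y) * b * (x * b) := by simp only [mul_assoc]
    _ = 0 := by rw [hcube, zero_mul]

theorem idealGen_subset {R : Type*} [Semiring R] [Module R A] {I : Submodule R A}
    (hI : ∀ a ∈ I, ∀ x : A, x * a ∈ I ∧ a * x ∈ I) (hp : p ∈ I) : idealGen p ⊆ I := by
  rintro _ ⟨n, u, v, rfl⟩
  exact Submodule.sum_mem I fun j _ => (hI _ (hI p hp (u j)).1 (v j)).2

end Ideal

/-- Minimality of `p` in a ring without a base field: every nonzero element of the corner `p·A·p`
has `p` as a left multiple. For an idempotent `p ≠ 0` this says that `p·A·p` is a division ring. -/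
def HasMinimalCorner {A : Type*} [Ring A] (p : A) : Prop :=
  ∀ x : A, p * x * p ≠ 0 → ∃ y : A, y * (p * x * p) = p

theorem hasMinimalCorner_of_forall_exists_smul {K A : Type*} [Field K] [Ring A] [Algebra K A]
    {p : A} (h : ∀ x : A, ∃ c : K, p * x * p = c • p) : HasMinimalCorner p := by
  intro x hx
  obtain ⟨c, hc⟩ := h x
  have hc0 : c ≠ 0 := by
    rintro rfl
    exact hx (by rw [hc, zero_smul])
  exact ⟨algebraMap K A c⁻¹, by rw [hc, ← Algebra.smul_def, inv_smul_smul₀ hc0]⟩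

theorem stmt12_general {R A : Type*} [Semiring R] [Ring A] [Module R A] (hA : IsSemiprimeRing A)
    {p : A} (hp : HasMinimalCorner p) (I : Submodule R A)
    (hI : ∀ a ∈ I, ∀ x : A, x * a ∈ I ∧ a * x ∈ I) (hI0 : I ≠ ⊥) (hIp : (I : Set A) ⊆ idealGen p) :
    (I : Set A) = idealGen p := by
  obtain ⟨b, hbI, hb0⟩ := I.ne_bot_iff.mp hI0
  obtain ⟨x, y, hxy⟩ := hA.exists_mul_mul_mul_mul_ne_zero (hIp hbI) hb0
  obtain ⟨z, hz⟩ := hp (x * b * y) hxy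
  have hbxy : x * b * y ∈ I := (hI _ (hI b hbI x).1 y).2
  have hcorner : p * (x * b * y) * p ∈ I := (hI _ (hI _ hbxy p).1 p).2
  have hpI : p ∈ I := hz ▸ (hI _ hcorner z).1
  exact hIp.antisymm (idealGen_subset hI hpI)

theorem stmt12 {A : Type*} [NormedRing A] [NormedAlgebra ℂ A] [CompleteSpace A]
    (hss : ∀ a : A, (∀ x : A, spectralRadius ℂ (x * a) = 0) → a = 0)
    (p : A) (hp0 : p ≠ 0) (hp : p * p = p)
    (hpmin : ∀ x : A, ∃ lam : ℂ, p * x * p = lam • p)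
    (hS : {a : A | spectralRank a < ⊤} = idealGen p) :
    ∀ I : Submodule ℂ A, (∀ a ∈ I, ∀ x : A, x * a ∈ I ∧ a * x ∈ I) →
      I ≠ ⊥ → (I : Set A) ⊆ {a : A | spectralRank a < ⊤} →
      (I : Set A) = {a : A | spectralRank a < ⊤} := by
  rw [hS]
  exact stmt12_general (isSemiprimeRing_of_forall_spectralRadius_mul_eq_zero hss)
    (hasMinimalCorner_of_forall_exists_smul hpmin)
end
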